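/- Let d ≥ 1, let A ⊆ ℝ^d be open, and let (u_k) be a sequence of measurable functions on A converging to a measurable function u in measure on A. Let A' ⊆ ℝ^d be open and bounded with compact closure contained in A, and let (ε_k) be positive reals with ε_k → 0. Define w_k(x,y) := u_k(x + ε_k y) for x ∈ A' and y ∈ Q'. Then for all sufficiently large k the function w_k is well defined on A' × Q', and w_k converges in measure on A' × Q' to the function (x,y) ↦ u(x). -/

import Mathlib

open MeasureTheory Filter Topology

/-- The open unit cube in `ℝ^d` centred at the origin. -/
def unitCube (d : ℕ) : Set (Fin d → ℝ) := {y | ∀ i, |y i| < 1 / 2}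

/-!
Composition `v ∘ φ` is jointly continuous for convergence in measure as long as the maps `φ` push
the source measure forward to measures dominated by one multiple of the measure on the target:
the domination transfers small sets of the target to small sets of the source uniformly in `φ`, so
the limit of the `v`s may be replaced by a compactly supported continuous function, for which
uniform continuity suffices.

For `φ (x, y) = x + h y` the pushforward of `μ.prod ν` is, by translation invariance, the same
multiple of `μ` whatever `h` is. Restricting to `A' × Q` with `h` uniformly small keeps the values
of `φ` in a fixed compact neighbourhood of `closure A'` inside `A`, on which `μ` is finite.
-/

open scoped ENNReal

section ConvergenceInMeasure

variable {Ω X ι : Type*} [MeasurableSpace Ω] [MeasurableSpace X] {l : Filter ι}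

lemma measure_add_le_edist_le {F : Type*} [PseudoEMetricSpace F] (μ : Measure Ω) (f g h : Ω → F)
    (a b : ℝ≥0∞) :
    μ {x | a + b ≤ edist (f x) (h x)} ≤
      μ {x | a ≤ edist (f x) (g x)} + μ {x | b ≤ edist (g x) (h x)} := by
  refine (measure_mono fun x hx => ?_).trans (measure_union_le _ _)
  by_contra! hsmall
  simp only [Set.mem_union, Set.mem_ofPred_eq, not_or, not_le] at hsmall
  exact ((edist_triangle _ (g x) _).trans_lt (ENNReal.add_lt_add hsmall.1 hsmall.2)).not_ge hx

lemma tendstoInMeasure_of_tendsto_measure_edist {F : Type*} [PseudoEMetricSpace F]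
    {μ : Measure Ω} {f g : ι → Ω → F} {h : Ω → F}
    (hfg : ∀ δ, 0 < δ → Tendsto (fun i => μ {x | δ ≤ edist (f i x) (g i x)}) l (𝓝 0))
    (hgh : TendstoInMeasure μ g l h) : TendstoInMeasure μ f l h := by
  intro δ hδ
  have hδ2 : 0 < δ / 2 := ENNReal.half_pos hδ.ne'
  have hsum := (hfg _ hδ2).add (hgh _ hδ2)
  rw [add_zero] at hsum
  refine tendsto_nhds_bot_mono' hsum fun i => ?_
  simpa only [ENNReal.add_halves] using measure_add_le_edist_le μ (f i) (g i) h (δ / 2) (δ / 2)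

lemma tendstoInMeasure_of_measure_le {F : Type*} [EDist F] {μ ν : Measure Ω} {f : ι → Ω → F}
    {g : Ω → F} (hf : TendstoInMeasure μ f l g) (hνμ : ν ≤ μ) : TendstoInMeasure ν f l g :=
  fun δ hδ => tendsto_nhds_bot_mono' (hf δ hδ) fun _ => hνμ _

lemma tendstoInMeasure_of_eventually_ae_edist_lt {F : Type*} [EDist F] {μ : Measure Ω}
    {f : ι → Ω → F} {g : Ω → F}
    (h : ∀ δ, 0 < δ → ∀ᶠ i in l, ∀ᵐ x ∂μ, edist (f i x) (g x) < δ) :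
    TendstoInMeasure μ f l g := by
  refine fun δ hδ => tendsto_nhds_of_eventually_eq ((h δ hδ).mono fun i hi => ?_)
  simpa only [ae_iff, not_lt] using hi

lemma tendstoInMeasure_uniformContinuous_comp {F G : Type*} [PseudoEMetricSpace F]
    [PseudoEMetricSpace G] {μ : Measure Ω} {f : ι → Ω → F} {g : Ω → F} {v : F → G}
    (hv : UniformContinuous v) (hf : TendstoInMeasure μ f l g) :
    TendstoInMeasure μ (fun i => v ∘ f i) l (v ∘ g) := by
  intro δ hδ
  obtain ⟨η, hη, hvη⟩ := EMetric.uniformContinuous_iff.1 hv δ hδ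
  refine tendsto_nhds_bot_mono' (hf η hη) fun i => measure_mono fun x hx => ?_
  exact le_of_not_gt fun hlt => (hvη hlt).not_ge hx

lemma tendstoInMeasure_restrict_of_tendsto_measure_lt_norm {F : Type*} [SeminormedAddCommGroup F]
    {μ : Measure Ω} {s : Set Ω} (hs : MeasurableSet s) {f : ι → Ω → F} {g : Ω → F}
    (h : ∀ δ > (0 : ℝ), Tendsto (fun i => μ {x | x ∈ s ∧ δ < ‖f i x - g x‖}) l (𝓝 0)) :
    TendstoInMeasure (μ.restrict s) f l g := by
  refine tendstoInMeasure_iff_norm.2 fun δ hδ => ?_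
  refine tendsto_nhds_bot_mono' (h (δ / 2) (half_pos hδ)) fun i => ?_
  rw [Measure.restrict_apply' hs]
  refine measure_mono ?_
  rintro x ⟨hx, hxs⟩
  exact ⟨hxs, (half_lt_self hδ).trans_le hx⟩

lemma tendsto_measure_lt_norm_of_tendstoInMeasure_restrict {F : Type*} [SeminormedAddCommGroup F]
    {μ : Measure Ω} {s : Set Ω} {f : ι → Ω → F} {g : Ω → F}
    (h : TendstoInMeasure (μ.restrict s) f l g) {δ : ℝ} (hδ : 0 < δ) :
    Tendsto (fun i => μ {x | x ∈ s ∧ δ < ‖f i x - g x‖}) l (𝓝 0) := by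
  refine tendsto_nhds_bot_mono' (tendstoInMeasure_iff_norm.1 h δ hδ) fun i => ?_
  have hsub : {x | x ∈ s ∧ δ < ‖f i x - g x‖} ⊆ {x | δ ≤ ‖f i x - g x‖} ∩ s :=
    fun x hx => ⟨hx.2.le, hx.1⟩
  exact (measure_mono hsub).trans (Measure.le_restrict_apply _ _)

variable {F : Type*} [NormedAddCommGroup F] [NormedSpace ℝ F]

lemma exists_seq_hasCompactSupport_tendstoInMeasure [TopologicalSpace X] [NormalSpace X]
    [R1Space X] [WeaklyLocallyCompactSpace X] [BorelSpace X] {ρ : Measure X} [IsFiniteMeasure ρ]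
    [ρ.Regular] {f : X → F} (hf : AEStronglyMeasurable f ρ) :
    ∃ g : ℕ → X → F, (∀ n, Continuous (g n)) ∧ (∀ n, HasCompactSupport (g n)) ∧
      TendstoInMeasure ρ g atTop f := by
  let s (n : ℕ) : SimpleFunc X F := hf.stronglyMeasurable_mk.approx n
  have hs : TendstoInMeasure ρ (fun n => ⇑(s n)) atTop f := by
    refine tendstoInMeasure_of_tendsto_ae (fun n => (s n).aestronglyMeasurable) ?_
    filter_upwards [hf.ae_eq_mk] with x hx
    simpa only [hx] using hf.stronglyMeasurable_mk.tendsto_approx x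
  have hs_mem (n : ℕ) : MemLp (s n) 1 ρ := (s n).memLp_of_isFiniteMeasure 1 ρ
  choose g hg_supp hg_le hg_cont hg_mem using fun n : ℕ =>
    (hs_mem n).exists_hasCompactSupport_eLpNorm_sub_le ENNReal.one_ne_top
      (ENNReal.inv_ne_zero.2 (ENNReal.natCast_ne_top n))
  have hdiff : TendstoInMeasure ρ (fun n => ⇑(s n) - g n) atTop 0 := by
    refine tendstoInMeasure_of_tendsto_eLpNorm one_ne_zero
      (fun n => ((hs_mem n).sub (hg_mem n)).aestronglyMeasurable) aestronglyMeasurable_zero ?_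
    simp only [sub_zero]
    exact tendsto_nhds_bot_mono' ENNReal.tendsto_inv_nat_nhds_zero hg_le
  have hedist (n : ℕ) (x : X) :
      edist ((⇑(s n) - g n) x) ((0 : X → F) x) = edist (g n x) (s n x) := by
    rw [Pi.sub_apply, Pi.zero_apply, edist_zero_right, ← edist_eq_enorm_sub, edist_comm]
  refine ⟨g, hg_cont, hg_supp, tendstoInMeasure_of_tendsto_measure_edist (fun δ hδ => ?_) hs⟩
  simpa only [hedist] using hdiff δ hδ

lemma measure_preimage_le_of_map_le {ν : Measure Ω} {ρ : Measure X} {c : ℝ≥0∞} {φ : Ω → X}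
    (hφ : AEMeasurable φ ν) (h : ν.map φ ≤ c • ρ) (s : Set X) : ν (φ ⁻¹' s) ≤ c * ρ s :=
  (Measure.le_map_apply hφ s).trans (h s)

section Composition

variable [PseudoEMetricSpace X] [WeaklyLocallyCompactSpace X] [BorelSpace X] {ν : Measure Ω}
  {ρ : Measure X} [IsFiniteMeasure ρ] [ρ.Regular] {c : ℝ≥0∞} {φ : ι → Ω → X} {ψ : Ω → X}
  {f : X → F}

lemma tendstoInMeasure_comp_left_of_map_le (hc : c ≠ ∞) (hφ_meas : ∀ i, AEMeasurable (φ i) ν)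
    (hψ_meas : AEMeasurable ψ ν) (hφ_le : ∀ᶠ i in l, ν.map (φ i) ≤ c • ρ)
    (hψ_le : ν.map ψ ≤ c • ρ) (hφ : TendstoInMeasure ν φ l ψ) (hf : AEStronglyMeasurable f ρ) :
    TendstoInMeasure ν (fun i => f ∘ φ i) l (f ∘ ψ) := by
  intro δ hδ
  refine ENNReal.tendsto_nhds_zero.2 fun η hη => ?_
  have hδ3 : 0 < δ / 3 := ENNReal.div_pos hδ.ne' ENNReal.ofNat_ne_top
  have hη3 : 0 < η / 3 := ENNReal.div_pos hη.ne' ENNReal.ofNat_ne_top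
  obtain ⟨g, hg_cont, hg_supp, hg⟩ := exists_seq_hasCompactSupport_tendstoInMeasure hf
  have hcg : Tendsto (fun n => c * ρ {x | δ / 3 ≤ edist (g n x) (f x)}) atTop (𝓝 0) := by
    simpa only [mul_zero] using ENNReal.Tendsto.const_mul (hg _ hδ3) (Or.inr hc)
  obtain ⟨n, hn⟩ := (ENNReal.tendsto_nhds_zero.1 hcg _ hη3).exists
  have hg_unif : UniformContinuous (g n) :=
    (hg_supp n).uniformContinuous_of_continuous (hg_cont n)
  have hgφ := tendstoInMeasure_uniformContinuous_comp hg_unif hφ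
  filter_upwards [hφ_le, ENNReal.tendsto_nhds_zero.1 (hgφ _ hδ3) _ hη3] with i hi hgi
  have hfg : ν {ω | δ / 3 ≤ edist ((f ∘ φ i) ω) ((g n ∘ φ i) ω)} ≤ η / 3 := by
    simp only [edist_comm ((f ∘ φ i) _)]
    exact (measure_preimage_le_of_map_le (hφ_meas i) hi _).trans hn
  have hgf : ν {ω | δ / 3 ≤ edist ((g n ∘ ψ) ω) ((f ∘ ψ) ω)} ≤ η / 3 :=
    (measure_preimage_le_of_map_le hψ_meas hψ_le _).trans hn
  calc ν {ω | δ ≤ edist ((f ∘ φ i) ω) ((f ∘ ψ) ω)}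
      = ν {ω | δ / 3 + δ / 3 + δ / 3 ≤ edist ((f ∘ φ i) ω) ((f ∘ ψ) ω)} := by
        rw [ENNReal.add_thirds]
    _ ≤ ν {ω | δ / 3 ≤ edist ((f ∘ φ i) ω) ((g n ∘ φ i) ω)} +
          ν {ω | δ / 3 ≤ edist ((g n ∘ φ i) ω) ((g n ∘ ψ) ω)} +
          ν {ω | δ / 3 ≤ edist ((g n ∘ ψ) ω) ((f ∘ ψ) ω)} :=
        (measure_add_le_edist_le ν _ (g n ∘ ψ) _ _ _).trans
          (add_le_add_left (measure_add_le_edist_le ν _ (g n ∘ φ i) _ _ _) _)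
    _ ≤ η / 3 + η / 3 + η / 3 := add_le_add (add_le_add hfg hgi) hgf
    _ = η := ENNReal.add_thirds η

theorem tendstoInMeasure_comp_of_map_le (hc : c ≠ ∞) (hφ_meas : ∀ i, AEMeasurable (φ i) ν)
    (hψ_meas : AEMeasurable ψ ν) (hφ_le : ∀ᶠ i in l, ν.map (φ i) ≤ c • ρ)
    (hψ_le : ν.map ψ ≤ c • ρ) (hφ : TendstoInMeasure ν φ l ψ) (hf : AEStronglyMeasurable f ρ)
    {v : ι → X → F} (hv : TendstoInMeasure ρ v l f) :
    TendstoInMeasure ν (fun i => v i ∘ φ i) l (f ∘ ψ) := by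
  refine tendstoInMeasure_of_tendsto_measure_edist (fun δ hδ => ?_)
    (tendstoInMeasure_comp_left_of_map_le hc hφ_meas hψ_meas hφ_le hψ_le hφ hf)
  have hcv : Tendsto (fun i => c * ρ {x | δ ≤ edist (v i x) (f x)}) l (𝓝 0) := by
    simpa only [mul_zero] using ENNReal.Tendsto.const_mul (hv δ hδ) (Or.inr hc)
  exact tendsto_nhds_bot_mono hcv
    (hφ_le.mono fun i hi => measure_preimage_le_of_map_le (hφ_meas i) hi _)

end Composition

end ConvergenceInMeasure

section Displacement

variable {G Y : Type*} [MeasurableSpace G] [MeasurableSpace Y]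

section Pushforward

variable [AddGroup G] [MeasurableAdd₂ G] {μ : Measure G} [SFinite μ] [μ.IsAddRightInvariant]
  {ν : Measure Y} [SFinite ν] {h : Y → G}

lemma map_fst_add_comp_snd_prod (hh : Measurable h) :
    (μ.prod ν).map (fun p : G × Y => p.1 + h p.2) = ν Set.univ • μ := by
  have hΦ : Measurable fun p : G × Y => p.1 + h p.2 := by fun_prop
  ext s hs
  rw [Measure.map_apply hΦ hs, Measure.prod_apply_symm (hΦ hs)]
  simp only [Set.preimage_preimage, measure_preimage_add_right, lintegral_const,
    Measure.smul_apply, smul_eq_mul, mul_comm]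

lemma map_fst_add_comp_snd_restrict_prod_le (hh : Measurable h) {s B : Set G} {t : Set Y}
    (hB : MeasurableSet B) (hmaps : ∀ x ∈ s, ∀ y ∈ t, x + h y ∈ B) :
    ((μ.prod ν).restrict (s ×ˢ t)).map (fun p : G × Y => p.1 + h p.2) ≤ ν t • μ.restrict B := by
  set Φ : G × Y → G := fun p => p.1 + h p.2
  have hΦ : Measurable Φ := by fun_prop
  have hsub : s ×ˢ t ⊆ Φ ⁻¹' B ∩ Set.univ ×ˢ t :=
    fun p hp => ⟨hmaps p.1 hp.1 p.2 hp.2, Set.mem_univ _, hp.2⟩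
  calc ((μ.prod ν).restrict (s ×ˢ t)).map Φ
      ≤ ((μ.prod ν).restrict (Φ ⁻¹' B ∩ Set.univ ×ˢ t)).map Φ :=
        Measure.map_mono (Measure.restrict_mono_set _ hsub) hΦ
    _ = ((μ.prod (ν.restrict t)).restrict (Φ ⁻¹' B)).map Φ := by
        rw [← Measure.restrict_restrict (hΦ hB), ← Measure.prod_restrict, Measure.restrict_univ]
    _ = ((μ.prod (ν.restrict t)).map Φ).restrict B := (Measure.restrict_map hΦ hB).symm
    _ = ν t • μ.restrict B := by
        rw [map_fst_add_comp_snd_prod hh, Measure.restrict_apply_univ, Measure.restrict_smul]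

end Pushforward

variable {ι : Type*} {l : Filter ι}

lemma tendstoInMeasure_fst_add_comp_snd [SeminormedAddCommGroup G] [OpensMeasurableSpace G]
    {μ : Measure G} {ν : Measure Y} {s : Set G} {t : Set Y} {h : ι → Y → G}
    (hh : ∀ i, Measurable (h i)) (hlim : TendstoUniformlyOn h 0 l t) :
    TendstoInMeasure ((μ.prod ν).restrict (s ×ˢ t)) (fun i p => p.1 + h i p.2) l Prod.fst := by
  refine tendstoInMeasure_of_eventually_ae_edist_lt fun δ hδ => ?_
  filter_upwards [EMetric.tendstoUniformlyOn_iff.1 hlim δ hδ] with i hi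
  have hmeas : MeasurableSet {p : G × Y | ‖h i p.2‖ₑ < δ} :=
    measurableSet_lt ((hh i).comp measurable_snd).enorm measurable_const
  simp only [edist_eq_enorm_sub, add_sub_cancel_left]
  rw [ae_restrict_iff hmeas]
  refine ae_of_all _ fun p hp => ?_
  simpa only [Pi.zero_apply, edist_comm (0 : G), edist_zero_right] using hi p.2 hp.2

theorem statement3_general [NormedAddCommGroup G] [ProperSpace G] [BorelSpace G]
    {μ : Measure G} [μ.IsAddHaarMeasure] {ν : Measure Y} [SFinite ν]
    {F : Type*} [NormedAddCommGroup F] [NormedSpace ℝ F]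
    {A : Set G} (hA : IsOpen A) {u : ι → G → F} {ulim : G → F}
    (hulim : AEStronglyMeasurable ulim (μ.restrict A))
    (hconv : ∀ δ > (0 : ℝ), Tendsto (fun i => μ {x | x ∈ A ∧ δ < ‖u i x - ulim x‖}) l (𝓝 0))
    {A' : Set G} (hA'_cpt : IsCompact (closure A')) (hA'_sub : closure A' ⊆ A)
    {Q : Set Y} (hQ : ν Q ≠ ∞) {h : ι → Y → G} (hh : ∀ i, Measurable (h i))
    (hlim : TendstoUniformlyOn h 0 l Q) :
    (∀ᶠ i in l, ∀ x ∈ A', ∀ y ∈ Q, x + h i y ∈ A) ∧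
    ∀ δ > (0 : ℝ),
      Tendsto (fun i => (μ.prod ν) {p : G × Y |
        p ∈ A' ×ˢ Q ∧ δ < ‖u i (p.1 + h i p.2) - ulim p.1‖}) l (𝓝 0) := by
  obtain ⟨r, hr, hBA⟩ := hA'_cpt.exists_cthickening_subset_open hA hA'_sub
  set B := Metric.cthickening r (closure A')
  have hB : IsCompact B := hA'_cpt.cthickening
  have hA'B : A' ⊆ B := subset_closure.trans (Metric.self_subset_cthickening _)
  have hmaps : ∀ᶠ i in l, ∀ x ∈ A', ∀ y ∈ Q, x + h i y ∈ B := by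
    filter_upwards [Metric.tendstoUniformlyOn_iff.1 hlim r hr] with i hi x hx y hy
    refine Metric.mem_cthickening_of_dist_le _ x _ _ (subset_closure hx) ?_
    simpa only [dist_self_add_left, Pi.zero_apply, dist_zero_left] using (hi y hy).le
  refine ⟨hmaps.mono fun i hi x hx y hy => hBA (hi x hx y hy), fun δ hδ => ?_⟩
  refine tendsto_measure_lt_norm_of_tendstoInMeasure_restrict ?_ hδ
  have : IsFiniteMeasure (μ.restrict B) := isFiniteMeasure_restrict.2 hB.measure_lt_top.ne
  have hmap_fst : ((μ.prod ν).restrict (A' ×ˢ Q)).map Prod.fst ≤ ν Q • μ.restrict B := by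
    simpa only [add_zero] using map_fst_add_comp_snd_restrict_prod_le (μ := μ) (ν := ν)
      (t := Q) (h := fun _ => 0) measurable_const hB.measurableSet
      fun x hx _ _ => (add_zero x).symm ▸ hA'B hx
  exact tendstoInMeasure_comp_of_map_le hQ
    (fun i => (measurable_fst.add ((hh i).comp measurable_snd)).aemeasurable)
    measurable_fst.aemeasurable
    (hmaps.mono fun i hi => map_fst_add_comp_snd_restrict_prod_le (hh i) hB.measurableSet hi)
    hmap_fst (tendstoInMeasure_fst_add_comp_snd hh hlim) (hulim.mono_set hBA)
    (tendstoInMeasure_of_measure_le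
      (tendstoInMeasure_restrict_of_tendsto_measure_lt_norm hA.measurableSet hconv)
      (Measure.restrict_mono_set μ hBA))

end Displacement

lemma tendstoUniformlyOn_smul_of_isBounded {ι 𝕜 E : Type*} [NormedField 𝕜]
    [SeminormedAddCommGroup E] [NormedSpace 𝕜 E] {l : Filter ι} {ε : ι → 𝕜}
    (hε : Tendsto ε l (𝓝 0)) {s : Set E} (hs : Bornology.IsBounded s) :
    TendstoUniformlyOn (fun i y => ε i • y) 0 l s := by
  obtain ⟨C, hC⟩ := hs.exists_norm_le
  have hlim : Tendsto (fun i => ‖ε i‖ * C) l (𝓝 0) := by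
    simpa only [norm_zero, zero_mul] using hε.norm.mul_const C
  refine Metric.tendstoUniformlyOn_iff.2 fun δ hδ => ?_
  filter_upwards [hlim.eventually_lt_const hδ] with i hi y hy
  rw [Pi.zero_apply, dist_zero_left, norm_smul]
  exact (mul_le_mul_of_nonneg_left (hC y hy) (norm_nonneg _)).trans_lt hi

lemma unitCube_eq_ball (d : ℕ) : unitCube d = Metric.ball 0 (1 / 2) := by
  ext y
  rw [mem_ball_zero_iff, pi_norm_lt_iff one_half_pos]
  rfl

lemma isBounded_unitCube (d : ℕ) : Bornology.IsBounded (unitCube d) :=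
  unitCube_eq_ball d ▸ Metric.isBounded_ball

theorem statement3
    (d : ℕ) (hd : 1 ≤ d)
    (A : Set (Fin d → ℝ)) (hA_open : IsOpen A)
    (u : ℕ → (Fin d → ℝ) → ℝ) (ulim : (Fin d → ℝ) → ℝ)
    (hu_meas : ∀ k, Measurable (u k)) (hulim_meas : Measurable ulim)
    (hconv : ∀ δ > (0:ℝ),
      Tendsto (fun k => volume {x | x ∈ A ∧ δ < |u k x - ulim x|}) atTop (𝓝 0))
    (A' : Set (Fin d → ℝ)) (hA'_open : IsOpen A') (hA'_bdd : Bornology.IsBounded A')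
    (hA'_cpt : IsCompact (closure A')) (hA'_sub : closure A' ⊆ A)
    (ε : ℕ → ℝ) (hε_pos : ∀ k, 0 < ε k) (hε_lim : Tendsto ε atTop (𝓝 0)) :
    (∀ᶠ k in atTop, ∀ x ∈ A', ∀ y ∈ unitCube d, x + ε k • y ∈ A) ∧
    ∀ δ > (0:ℝ),
      Tendsto
        (fun k => volume {p : (Fin d → ℝ) × (Fin d → ℝ) |
          p ∈ A' ×ˢ unitCube d ∧ δ < |u k (p.1 + ε k • p.2) - ulim p.1|})
        atTop (𝓝 0) := by
  exact statement3_general hA_open hulim_meas.aestronglyMeasurable hconv hA'_cpt hA'_sub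
    (isBounded_unitCube d).measure_lt_top.ne (fun k => measurable_const_smul (ε k))
    (tendstoUniformlyOn_smul_of_isBounded hε_lim (isBounded_unitCube d))
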